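/- Fix 0 < q < 1/2 with (1/2 + q)² < 1/2. Then the norm ‖·‖_q is equivalent to the Tsirelson norm on the finitely supported sequences: ‖x‖_T ≤ ‖x‖_q for all finitely supported x : ℕ → ℝ, and there exists a constant C ≥ 1 such that ‖x‖_q ≤ C·‖x‖_T for all finitely supported x. -/

import Mathlib

/-!
The inequality `‖x‖_T ≤ ‖x‖_q` holds at each step of the two iterations.

For the converse, write `θ = 1/2 + q`. Unfolding `‖x‖_q` once gives an admissible family
`E_1 < ⋯ < E_n` with weights `1/2`, except for one distinguished set `E_j` of weight `θ`. Unfolding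
once more on `E_j` gives an admissible family inside `E_j` with weights at most
`max (θ / 2, θ²) ≤ 1/2`. So `‖x‖_q` is controlled by sums with all weights `1/2` over three
admissible families: the sets left of `E_j`, those inside `E_j`, and those right of `E_j`.

The extra sets are absorbed by a regrouping principle (`regroup`): `(2 ^ t - 1) b` nonempty successive
sets beyond `b` split into `t` consecutive admissible blocks, since the first `b` sets push the
rest beyond `2b`, the next `2b` sets push the rest beyond `4b`, and so on. Consequently, the
hypothesis that the `k`-th iterate at each `x` is at most twice the sum of `‖G x‖_T` over at most `12`
suitable successive sets `G` reproduces itself: three families with `12` pieces per member regroup into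
`3 · 4 = 12` blocks because `12 ≤ 2 ^ 4 - 1`, and half the sum over an admissible block is at most
the Tsirelson norm of the restriction to its union (`piecesBound_succ`, `distinguishedBound_succ`).
The factor `2` pays for the weight `θ > 1/2` when the expansion stops at a distinguished set.
Each of the `12` terms is at most `‖x‖_T`, so `C = 24` works.
-/


noncomputable section

/-- sup norm of a finitely supported sequence -/
def supNorm (x : ℕ →₀ ℝ) : ℝ := ⨆ i, |x i|

/-- coordinate restriction of `x` to the finite set `E` -/
def restr (E : Finset ℕ) (x : ℕ →₀ ℝ) : ℕ →₀ ℝ := x.filter (· ∈ E)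

/-- an admissible family of `m` successive finite sets whose elements are `≥ n`. -/
def AdmissibleOn (n m : ℕ) (E : Fin m → Finset ℕ) : Prop :=
  (∀ i j : Fin m, i < j → ∀ a ∈ E i, ∀ b ∈ E j, a < b) ∧
  (∀ i : Fin m, ∀ a ∈ E i, n ≤ a)

/-- `n ≤ E 0 < ⋯ < E (n-1)` -/
def Admissible (n : ℕ) (E : Fin n → Finset ℕ) : Prop := AdmissibleOn n n E

/-- the iteration defining the Tsirelson norm. -/
def tsAux : ℕ → (ℕ →₀ ℝ) → ℝ
  | 0, x => supNorm x
  | k + 1, x => max (supNorm x)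
      (sSup {r : ℝ | ∃ (n : ℕ) (E : Fin n → Finset ℕ), 0 < n ∧ Admissible n E ∧
        r = (1 / 2) * ∑ i, tsAux k (restr (E i) x)})

/-- the Tsirelson norm `‖x‖_T = lim_k ‖x‖_k` on finitely supported sequences -/
def tsirelsonNorm (x : ℕ →₀ ℝ) : ℝ := ⨆ k, tsAux k x

/-- the iteration defining the norm `‖·‖_q`:  at each step
`‖x‖ = max (‖x‖_∞, sup {(1/2) ∑ ‖E_i x‖ + q max_j ‖E_j x‖ : n ≤ E_1 < ⋯ < E_n})`. -/
def qAux (q : ℝ) : ℕ → (ℕ →₀ ℝ) → ℝ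
  | 0, x => supNorm x
  | k + 1, x => max (supNorm x)
      (sSup {r : ℝ | ∃ (n : ℕ) (E : Fin n → Finset ℕ), 0 < n ∧ Admissible n E ∧
        r = (1 / 2) * (∑ i, qAux q k (restr (E i) x)) +
            q * ⨆ j : Fin n, qAux q k (restr (E j) x)})

/-- the norm `‖·‖_q`, the increasing limit of the iteration `qAux`. -/
def qNorm (q : ℝ) (x : ℕ →₀ ℝ) : ℝ := ⨆ k, qAux q k x

/-! ### Basic estimates for the two iterations -/

/-- The `ℓ¹` norm, an upper bound for every norm in play; it serves to show that the suprema
defining these norms are over bounded sets. -/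
def ellOne (x : ℕ →₀ ℝ) : ℝ := ∑ a ∈ x.support, |x a|

lemma restr_apply (E : Finset ℕ) (x : ℕ →₀ ℝ) (a : ℕ) :
    restr E x a = if a ∈ E then x a else 0 := by
  simp [restr, Finsupp.filter_apply]

lemma restr_restr (E F : Finset ℕ) (x : ℕ →₀ ℝ) :
    restr E (restr F x) = restr (E ∩ F) x := by
  ext a
  simp only [restr_apply, Finset.mem_inter]
  split_ifs <;> simp_all

lemma restr_of_subset {E F : Finset ℕ} (h : E ⊆ F) (x : ℕ →₀ ℝ) :
    restr E (restr F x) = restr E x := by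
  rw [restr_restr, Finset.inter_eq_left.2 h]

lemma restr_support (x : ℕ →₀ ℝ) : restr x.support x = x := by
  ext a
  simp only [restr_apply, Finsupp.mem_support_iff]
  split_ifs <;> simp_all

lemma restr_empty (x : ℕ →₀ ℝ) : restr ∅ x = 0 := by
  ext a
  simp [restr_apply]

lemma ellOne_nonneg (x : ℕ →₀ ℝ) : 0 ≤ ellOne x :=
  Finset.sum_nonneg fun _ _ => abs_nonneg _

lemma abs_le_ellOne (x : ℕ →₀ ℝ) (a : ℕ) : |x a| ≤ ellOne x := by
  by_cases h : a ∈ x.support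
  · exact Finset.single_le_sum (f := fun a => |x a|) (fun _ _ => abs_nonneg _) h
  · rw [Finsupp.notMem_support_iff.1 h, abs_zero]
    exact ellOne_nonneg x

lemma ellOne_restr (E : Finset ℕ) (x : ℕ →₀ ℝ) :
    ellOne (restr E x) = ∑ a ∈ x.support, if a ∈ E then |x a| else 0 := by
  unfold ellOne
  have h : (restr E x).support ⊆ x.support := by
    intro a
    simp only [Finsupp.mem_support_iff, restr_apply]
    split_ifs <;> simp
  rw [Finset.sum_subset h (fun a _ ha => by rw [Finsupp.notMem_support_iff.1 ha, abs_zero])]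
  refine Finset.sum_congr rfl fun a _ => ?_
  rw [restr_apply]
  split_ifs <;> simp

lemma sum_ellOne_le {n : ℕ} {E : Fin n → Finset ℕ} (hE : Admissible n E) (x : ℕ →₀ ℝ) :
    ∑ i, ellOne (restr (E i) x) ≤ ellOne x := by
  simp only [ellOne_restr]
  rw [Finset.sum_comm]
  refine Finset.sum_le_sum fun a _ => ?_
  by_cases h : ∃ i, a ∈ E i
  · obtain ⟨i, hi⟩ := h
    rw [Finset.sum_eq_single i]
    · simp [hi]
    · intro j _ hj
      rw [if_neg]
      intro ha
      rcases lt_or_gt_of_ne hj with h | h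
      · exact lt_irrefl a (hE.1 _ _ h a ha a hi)
      · exact lt_irrefl a (hE.1 _ _ h a hi a ha)
    · simp
  · push Not at h
    simp [h]

lemma bddAbove_abs (x : ℕ →₀ ℝ) : BddAbove (Set.range fun i => |x i|) :=
  ⟨ellOne x, by rintro _ ⟨a, rfl⟩; exact abs_le_ellOne x a⟩

lemma abs_le_supNorm (x : ℕ →₀ ℝ) (a : ℕ) : |x a| ≤ supNorm x :=
  le_ciSup (bddAbove_abs x) a

lemma supNorm_nonneg (x : ℕ →₀ ℝ) : 0 ≤ supNorm x :=
  (abs_nonneg _).trans (abs_le_supNorm x 0)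

lemma supNorm_le_ellOne (x : ℕ →₀ ℝ) : supNorm x ≤ ellOne x :=
  ciSup_le fun a => abs_le_ellOne x a

lemma supNorm_restr_le (E : Finset ℕ) (x : ℕ →₀ ℝ) : supNorm (restr E x) ≤ supNorm x := by
  refine ciSup_le fun a => ?_
  rw [restr_apply]
  split_ifs
  · exact abs_le_supNorm x a
  · simpa using supNorm_nonneg x

/-- The values over which the supremum in `tsAux (k + 1) x` is taken. -/
def tsValues (k : ℕ) (x : ℕ →₀ ℝ) : Set ℝ :=
  {r : ℝ | ∃ (n : ℕ) (E : Fin n → Finset ℕ), 0 < n ∧ Admissible n E ∧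
    r = (1 / 2) * ∑ i, tsAux k (restr (E i) x)}

/-- The values over which the supremum in `qAux q (k + 1) x` is taken. -/
def qValues (q : ℝ) (k : ℕ) (x : ℕ →₀ ℝ) : Set ℝ :=
  {r : ℝ | ∃ (n : ℕ) (E : Fin n → Finset ℕ), 0 < n ∧ Admissible n E ∧
    r = (1 / 2) * (∑ i, qAux q k (restr (E i) x)) +
      q * ⨆ j : Fin n, qAux q k (restr (E j) x)}

lemma tsAux_succ (k : ℕ) (x : ℕ →₀ ℝ) :
    tsAux (k + 1) x = max (supNorm x) (sSup (tsValues k x)) := rfl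

lemma qAux_succ (q : ℝ) (k : ℕ) (x : ℕ →₀ ℝ) :
    qAux q (k + 1) x = max (supNorm x) (sSup (qValues q k x)) := rfl

lemma supNorm_le_tsAux (k : ℕ) (x : ℕ →₀ ℝ) : supNorm x ≤ tsAux k x := by
  cases k
  · exact le_rfl
  · exact le_max_left _ _

lemma supNorm_le_qAux (q : ℝ) (k : ℕ) (x : ℕ →₀ ℝ) : supNorm x ≤ qAux q k x := by
  cases k
  · exact le_rfl
  · exact le_max_left _ _

lemma tsAux_nonneg (k : ℕ) (x : ℕ →₀ ℝ) : 0 ≤ tsAux k x :=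
  (supNorm_nonneg x).trans (supNorm_le_tsAux k x)

lemma qAux_nonneg (q : ℝ) (k : ℕ) (x : ℕ →₀ ℝ) : 0 ≤ qAux q k x :=
  (supNorm_nonneg x).trans (supNorm_le_qAux q k x)

lemma tsValues_le {k : ℕ} (ih : ∀ x, tsAux k x ≤ ellOne x) (x : ℕ →₀ ℝ) :
    ∀ r ∈ tsValues k x, r ≤ ellOne x := by
  rintro _ ⟨n, E, -, hE, rfl⟩
  have h1 : ∑ i, tsAux k (restr (E i) x) ≤ ellOne x :=
    (Finset.sum_le_sum fun i _ => ih _).trans (sum_ellOne_le hE x)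
  linarith [ellOne_nonneg x]

lemma tsAux_le_ellOne (k : ℕ) : ∀ x, tsAux k x ≤ ellOne x := by
  induction k with
  | zero => exact supNorm_le_ellOne
  | succ k ih =>
    intro x
    rw [tsAux_succ]
    exact max_le (supNorm_le_ellOne x) (Real.sSup_le (tsValues_le ih x) (ellOne_nonneg x))

lemma bddAbove_tsValues (k : ℕ) (x : ℕ →₀ ℝ) : BddAbove (tsValues k x) :=
  ⟨ellOne x, tsValues_le (tsAux_le_ellOne k) x⟩

lemma qValues_le {q : ℝ} (hq0 : 0 < q) (hq1 : q < 1 / 2) {k : ℕ}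
    (ih : ∀ x, qAux q k x ≤ ellOne x) (x : ℕ →₀ ℝ) :
    ∀ r ∈ qValues q k x, r ≤ ellOne x := by
  rintro _ ⟨n, E, hn, hE, rfl⟩
  have h1 : ∑ i, qAux q k (restr (E i) x) ≤ ellOne x :=
    (Finset.sum_le_sum fun i _ => ih _).trans (sum_ellOne_le hE x)
  have : Nonempty (Fin n) := ⟨⟨0, hn⟩⟩
  have h2 : ⨆ j : Fin n, qAux q k (restr (E j) x) ≤ ellOne x :=
    ciSup_le fun j => (Finset.single_le_sum (f := fun j => qAux q k (restr (E j) x))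
      (fun _ _ => qAux_nonneg _ _ _) (Finset.mem_univ j)).trans h1
  nlinarith [ellOne_nonneg x]

lemma qAux_le_ellOne {q : ℝ} (hq0 : 0 < q) (hq1 : q < 1 / 2) (k : ℕ) :
    ∀ x, qAux q k x ≤ ellOne x := by
  induction k with
  | zero => exact supNorm_le_ellOne
  | succ k ih =>
    intro x
    rw [qAux_succ]
    exact max_le (supNorm_le_ellOne x)
      (Real.sSup_le (qValues_le hq0 hq1 ih x) (ellOne_nonneg x))

lemma tsAux_le_qAux {q : ℝ} (hq0 : 0 < q) (hq1 : q < 1 / 2) (k : ℕ) :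
    ∀ x, tsAux k x ≤ qAux q k x := by
  induction k with
  | zero => exact fun x => le_rfl
  | succ k ih =>
    intro x
    refine max_le (supNorm_le_qAux q _ x) (Real.sSup_le ?_ (qAux_nonneg q _ x))
    rintro _ ⟨n, E, hn, hE, rfl⟩
    rw [qAux_succ]
    refine le_max_of_le_right (le_trans ?_ (le_csSup
      ⟨ellOne x, qValues_le hq0 hq1 (qAux_le_ellOne hq0 hq1 k) x⟩ ⟨n, E, hn, hE, rfl⟩))
    have h1 : ∑ i, tsAux k (restr (E i) x) ≤ ∑ i, qAux q k (restr (E i) x) :=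
      Finset.sum_le_sum fun i _ => ih _
    have h2 : 0 ≤ q * ⨆ j : Fin n, qAux q k (restr (E j) x) :=
      mul_nonneg hq0.le (Real.iSup_nonneg fun j => qAux_nonneg _ _ _)
    linarith

lemma tsAux_le_succ (k : ℕ) : ∀ x, tsAux k x ≤ tsAux (k + 1) x := by
  induction k with
  | zero => exact fun x => le_max_left _ _
  | succ k ih =>
    intro x
    refine max_le (supNorm_le_tsAux _ x) (Real.sSup_le ?_ (tsAux_nonneg _ x))
    rintro _ ⟨n, E, hn, hE, rfl⟩
    rw [tsAux_succ]
    refine le_max_of_le_right (le_trans ?_ (le_csSup (bddAbove_tsValues _ x)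
      ⟨n, E, hn, hE, rfl⟩))
    gcongr
    exact ih _

/-! ### The Tsirelson norm -/

lemma bddAbove_tsAux (x : ℕ →₀ ℝ) : BddAbove (Set.range fun k => tsAux k x) :=
  ⟨ellOne x, by rintro _ ⟨k, rfl⟩; exact tsAux_le_ellOne k x⟩

lemma tsAux_le_norm (k : ℕ) (x : ℕ →₀ ℝ) : tsAux k x ≤ tsirelsonNorm x :=
  le_ciSup (bddAbove_tsAux x) k

lemma supNorm_le_norm (x : ℕ →₀ ℝ) : supNorm x ≤ tsirelsonNorm x := tsAux_le_norm 0 x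

lemma tsirelsonNorm_nonneg (x : ℕ →₀ ℝ) : 0 ≤ tsirelsonNorm x :=
  (supNorm_nonneg x).trans (supNorm_le_norm x)

lemma tsirelsonNorm_zero : tsirelsonNorm 0 = 0 := by
  refine le_antisymm (ciSup_le fun k => (tsAux_le_ellOne k 0).trans ?_) (tsirelsonNorm_nonneg 0)
  simp [ellOne]

lemma tsAux_restr_le (k : ℕ) (F : Finset ℕ) (x : ℕ →₀ ℝ) :
    tsAux k (restr F x) ≤ tsAux k x := by
  cases k with
  | zero => exact supNorm_restr_le F x
  | succ k =>
    refine max_le ((supNorm_restr_le F x).trans (supNorm_le_tsAux _ x))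
      (Real.sSup_le ?_ (tsAux_nonneg _ x))
    rintro _ ⟨n, E, hn, hE, rfl⟩
    rw [tsAux_succ]
    refine le_max_of_le_right (le_csSup (bddAbove_tsValues _ x)
      ⟨n, fun i => E i ∩ F, hn, ⟨?_, ?_⟩, ?_⟩)
    · exact fun i j hij a ha b hb =>
        hE.1 i j hij a (Finset.mem_inter.1 ha).1 b (Finset.mem_inter.1 hb).1
    · exact fun i a ha => hE.2 i a (Finset.mem_inter.1 ha).1
    · simp only [restr_restr]

lemma norm_restr_le (F : Finset ℕ) (x : ℕ →₀ ℝ) :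
    tsirelsonNorm (restr F x) ≤ tsirelsonNorm x :=
  ciSup_le fun k => (tsAux_restr_le k F x).trans (tsAux_le_norm k x)

/-- The nontrivial inequality in the implicit equation for the Tsirelson norm. -/
lemma half_sum_le_norm {n : ℕ} {E : Fin n → Finset ℕ} (hE : Admissible n E) (x : ℕ →₀ ℝ) :
    (1 / 2) * ∑ i, tsirelsonNorm (restr (E i) x) ≤ tsirelsonNorm x := by
  rcases Nat.eq_zero_or_pos n with rfl | hn
  · simpa using tsirelsonNorm_nonneg x
  have hlim : ∀ y, Filter.Tendsto (fun k => tsAux k y) Filter.atTop (nhds (tsirelsonNorm y)) :=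
    fun y => tendsto_atTop_ciSup (monotone_nat_of_le_succ fun k => tsAux_le_succ k y)
      (bddAbove_tsAux y)
  refine le_of_tendsto' ((tendsto_finsetSum _ fun i _ => hlim (restr (E i) x)).const_mul (1 / 2))
    fun k => ?_
  refine le_trans ?_ (tsAux_le_norm (k + 1) x)
  rw [tsAux_succ]
  exact le_max_of_le_right (le_csSup (bddAbove_tsValues _ x) ⟨n, E, hn, hE, rfl⟩)

/-! ### Lists of successive sets -/

/-- The finite sets in the list are successive: `E₁ < E₂ < ⋯` (empty sets are allowed). -/
def Successive (L : List (Finset ℕ)) : Prop :=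
  L.Pairwise fun E F => ∀ a ∈ E, ∀ b ∈ F, a < b

/-- `∑ ‖E x‖_T` over the sets `E` of the list. -/
def normSum (x : ℕ →₀ ℝ) (L : List (Finset ℕ)) : ℝ :=
  (L.map fun E => tsirelsonNorm (restr E x)).sum

lemma normSum_nil (x : ℕ →₀ ℝ) : normSum x [] = 0 := rfl

lemma normSum_cons (x : ℕ →₀ ℝ) (E : Finset ℕ) (L : List (Finset ℕ)) :
    normSum x (E :: L) = tsirelsonNorm (restr E x) + normSum x L := by
  simp [normSum]

lemma normSum_append (x : ℕ →₀ ℝ) (L M : List (Finset ℕ)) :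
    normSum x (L ++ M) = normSum x L + normSum x M := by
  simp [normSum]

lemma normSum_nonneg (x : ℕ →₀ ℝ) (L : List (Finset ℕ)) : 0 ≤ normSum x L := by
  induction L with
  | nil => exact le_rfl
  | cons E L ih => rw [normSum_cons]; linarith [tsirelsonNorm_nonneg (restr E x)]

lemma normSum_le (x : ℕ →₀ ℝ) (L : List (Finset ℕ)) :
    normSum x L ≤ L.length * tsirelsonNorm x := by
  induction L with
  | nil => simp [normSum_nil]
  | cons E L ih =>
    rw [normSum_cons, List.length_cons]
    push_cast
    linarith [norm_restr_le E x]

/-- Empty sets contribute nothing, so they may be discarded before sets are counted. -/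
lemma normSum_filter (x : ℕ →₀ ℝ) (L : List (Finset ℕ)) :
    normSum x (L.filter fun E => E ≠ ∅) = normSum x L := by
  induction L with
  | nil => rfl
  | cons E L ih =>
    by_cases h : E = ∅
    · subst h
      simpa [normSum_cons, restr_empty, tsirelsonNorm_zero] using ih
    · rw [List.filter_cons_of_pos (by simpa using h), normSum_cons, normSum_cons, ih]

/-- Only finitely many restrictions of `x` exist, so the sum `∑ ‖E x‖_T` over at most `c` successive
sets `E` attains its maximum. -/
lemma exists_max_normSum (c : ℕ) (x : ℕ →₀ ℝ) :
    ∃ L, Successive L ∧ L.length ≤ c ∧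
      ∀ M, Successive M → M.length ≤ c → normSum x M ≤ normSum x L := by
  have hfin1 : (Set.range fun E => tsirelsonNorm (restr E x)).Finite := by
    refine (x.support.powerset.finite_toSet.image
      fun E => tsirelsonNorm (restr E x)).subset ?_
    rintro _ ⟨E, rfl⟩
    refine ⟨E ∩ x.support, by simp, ?_⟩
    simp only [← restr_restr, restr_support]
  have hfin : ∀ c : ℕ, {r | ∃ L : List (Finset ℕ), L.length ≤ c ∧ r = normSum x L}.Finite := by
    intro c
    induction c with
    | zero =>
      refine (Set.finite_singleton (0 : ℝ)).subset ?_
      rintro _ ⟨L, hL, rfl⟩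
      rw [List.length_eq_zero_iff.1 (Nat.le_zero.1 hL)]
      rfl
    | succ c ih =>
      refine ((Set.finite_singleton (0 : ℝ)).union (hfin1.image2 (· + ·) ih)).subset ?_
      rintro _ ⟨L, hL, rfl⟩
      cases L with
      | nil => exact Or.inl rfl
      | cons E L =>
        exact Or.inr ⟨_, ⟨E, rfl⟩, _, ⟨L, by simpa using hL, rfl⟩, (normSum_cons x E L).symm⟩
  have hfin2 : {r | ∃ L : List (Finset ℕ), Successive L ∧ L.length ≤ c ∧ r = normSum x L}.Finite :=
    (hfin c).subset fun r ⟨L, _, h⟩ => ⟨L, h⟩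
  obtain ⟨r, ⟨L, hL, hLc, rfl⟩, hmax⟩ := Set.exists_max_image _ id hfin2
    ⟨0, [], List.Pairwise.nil, Nat.zero_le _, rfl⟩
  exact ⟨L, hL, hLc, fun M hM hMc => hmax _ ⟨M, hM, hMc, rfl⟩⟩

/-- Each nonempty set moves the following ones at least one step to the right. -/
lemma le_of_mem_drop (i : ℕ) : ∀ (b : ℕ) (L : List (Finset ℕ)), Successive L →
    (∀ E ∈ L, E ≠ ∅) → (∀ E ∈ L, ∀ a ∈ E, b ≤ a) → ∀ E ∈ L.drop i, ∀ a ∈ E, b + i ≤ a := by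
  induction i with
  | zero => intro b L _ _ h; simpa using h
  | succ i ih =>
    intro b L hL hne hb E hE a ha
    cases L with
    | nil => simp at hE
    | cons F L =>
      have hL' := List.pairwise_cons.1 hL
      obtain ⟨f, hf⟩ := Finset.nonempty_iff_ne_empty.2 (hne F (by simp))
      have := ih (b + 1) L hL'.2 (fun G hG => hne G (by simp [hG]))
        (fun G hG g hg => lt_of_le_of_lt (hb F (by simp) f hf) (hL'.1 G hG f hf g hg))
        E (by simpa using hE) a ha
      omega

/-- A list of at most `b` successive sets beyond `b` is admissible, so it merges into one set. -/
lemma half_normSum_le (b : ℕ) (L : List (Finset ℕ)) (hL : Successive L)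
    (hb : ∀ E ∈ L, ∀ a ∈ E, b ≤ a) (hlen : L.length ≤ b) (x : ℕ →₀ ℝ) (U : Finset ℕ)
    (hU : ∀ E ∈ L, E ⊆ U) :
    (1 / 2) * normSum x L ≤ tsirelsonNorm (restr U x) := by
  have hadm : Admissible L.length fun i => L.get i :=
    ⟨fun i j hij => List.pairwise_iff_get.1 hL i j hij,
      fun i a ha => hlen.trans (hb _ (List.get_mem L i) a ha)⟩
  have h := half_sum_le_norm hadm (restr U x)
  have h2 : ∑ i : Fin L.length, tsirelsonNorm (restr (L.get i) (restr U x)) = normSum x L := by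
    simp only [normSum, List.get_eq_getElem]
    rw [← Fin.sum_univ_fun_getElem L fun E => tsirelsonNorm (restr E x)]
    exact Finset.sum_congr rfl fun i _ => by
      rw [restr_of_subset (hU _ (List.getElem_mem _))]
  rwa [h2] at h

/-- The regrouping principle: since each block of `b` nonempty sets beyond `b` pushes the remaining
ones beyond `2b`, the admissible block sizes double, and `t` blocks absorb `(2 ^ t - 1) b` sets. -/
lemma regroup (t : ℕ) : ∀ (b : ℕ) (L : List (Finset ℕ)), Successive L →
    (∀ E ∈ L, E ≠ ∅) → (∀ E ∈ L, ∀ a ∈ E, b ≤ a) → L.length ≤ (2 ^ t - 1) * b →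
    ∀ x : ℕ →₀ ℝ, ∃ G, Successive G ∧ G.length ≤ t ∧
      (∀ F ∈ G, ∀ a ∈ F, ∃ E ∈ L, a ∈ E) ∧ (1 / 2) * normSum x L ≤ normSum x G := by
  induction t with
  | zero =>
    intro b L _ _ _ hlen x
    have : L = [] := List.length_eq_zero_iff.1 (by simpa using hlen)
    subst this
    exact ⟨[], List.Pairwise.nil, le_rfl, by simp, by simp [normSum_nil]⟩
  | succ t ih =>
    intro b L hL hne hb hlen x
    have hsub1 : ∀ E ∈ L.take b, E ∈ L := fun E => List.mem_of_mem_take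
    have hsub2 : ∀ E ∈ L.drop b, E ∈ L := fun E => List.mem_of_mem_drop
    have hsplit : Successive (L.take b ++ L.drop b) := by rwa [List.take_append_drop]
    obtain ⟨h1, h2, h12⟩ := List.pairwise_append.1 hsplit
    obtain ⟨G, hG, hGt, hGL, hGx⟩ := ih (b + b) (L.drop b) h2 (fun E hE => hne E (hsub2 E hE))
      (le_of_mem_drop b b L hL hne hb) (by
        rw [List.length_drop]
        have hp : 1 ≤ 2 ^ t := Nat.one_le_two_pow
        obtain ⟨p, hp'⟩ := Nat.exists_eq_add_of_le hp
        rw [pow_succ, hp'] at hlen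
        rw [hp']
        have e1 : ((1 + p) * 2 - 1) * b = 2 * (p * b) + b := by
          have : (1 + p) * 2 - 1 = 2 * p + 1 := by omega
          rw [this]; ring
        have e2 : (1 + p - 1) * (b + b) = 2 * (p * b) := by
          have : 1 + p - 1 = p := by omega
          rw [this]; ring
        omega) x
    have hmem : ∀ a, a ∈ (L.take b).toFinset.biUnion id ↔ ∃ E ∈ L.take b, a ∈ E := by simp
    refine ⟨(L.take b).toFinset.biUnion id :: G, List.pairwise_cons.2 ⟨?_, hG⟩, ?_, ?_, ?_⟩
    · intro F hF a ha c hc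
      obtain ⟨E, hE, haE⟩ := (hmem a).1 ha
      obtain ⟨E', hE', hcE⟩ := hGL F hF c hc
      exact h12 E hE E' hE' a haE c hcE
    · simpa using hGt
    · intro F hF a ha
      rcases List.mem_cons.1 hF with rfl | hF
      · obtain ⟨E, hE, haE⟩ := (hmem a).1 ha
        exact ⟨E, hsub1 E hE, haE⟩
      · obtain ⟨E, hE, haE⟩ := hGL F hF a ha
        exact ⟨E, hsub2 E hE, haE⟩
    · have h := half_normSum_le b (L.take b) h1 (fun E hE => hb E (hsub1 E hE))
        (List.length_take_le _ _) x ((L.take b).toFinset.biUnion id)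
        (fun E hE a ha => (hmem a).2 ⟨E, hE, ha⟩)
      rw [← List.take_append_drop b L, normSum_append, List.take_append_drop, normSum_cons]
      linarith

/-- If each member of an admissible family is cut into at most `12` successive pieces, then all the
pieces together can be regrouped into at most `4` admissible blocks, because `12 ≤ 2 ^ 4 - 1`. -/
lemma regroup_family {n : ℕ} {E : Fin n → Finset ℕ} (hE : Admissible n E)
    (L : Fin n → List (Finset ℕ)) (hL : ∀ i, Successive (L i)) (hlen : ∀ i, (L i).length ≤ 12)
    (hsub : ∀ i, ∀ F ∈ L i, F ⊆ E i) (x : ℕ →₀ ℝ) :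
    ∃ G, Successive G ∧ G.length ≤ 4 ∧ (∀ F ∈ G, ∀ a ∈ F, ∃ i, ∃ P ∈ L i, a ∈ P) ∧
      (1 / 2) * ∑ i, normSum x (L i) ≤ normSum x G := by
  set A := (List.finRange n).flatMap L with hA
  have hAsucc : Successive A := by
    refine List.pairwise_flatMap.2 ⟨fun i _ => hL i, ?_⟩
    refine (List.pairwise_lt_finRange n).imp ?_
    intro i j hij P hP Q hQ a ha b hb
    exact hE.1 i j hij a (hsub i P hP ha) b (hsub j Q hQ hb)
  have hAmem : ∀ P ∈ A, ∃ i, P ∈ L i := by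
    intro P hP
    obtain ⟨i, -, h⟩ := List.mem_flatMap.1 hP
    exact ⟨i, h⟩
  have hAlen : A.length ≤ 12 * n := by
    rw [hA, List.length_flatMap]
    have := List.sum_le_card_nsmul ((List.finRange n).map fun i => (L i).length) 12 (by
      intro y hy
      obtain ⟨i, -, rfl⟩ := List.mem_map.1 hy
      exact hlen i)
    simp only [List.length_map, List.length_finRange, smul_eq_mul] at this
    linarith
  have hAsum : normSum x A = ∑ i, normSum x (L i) := by
    have : ∀ I : List (Fin n), normSum x (I.flatMap L) = (I.map fun i => normSum x (L i)).sum := by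
      intro I
      induction I with
      | nil => rfl
      | cons i I ih => rw [List.flatMap_cons, normSum_append, ih]; simp
    rw [hA, this, Fin.sum_univ_def]
  obtain ⟨G, hG, hG4, hGA, hGx⟩ := regroup 4 n (A.filter fun E => E ≠ ∅)
    (List.Pairwise.filter _ hAsucc) (fun P hP => by simpa using (List.mem_filter.1 hP).2)
    (fun P hP a ha => by
      obtain ⟨i, hi⟩ := hAmem P (List.mem_filter.1 hP).1
      exact hE.2 i a (hsub i P hi ha))
    (by
      have := List.length_filter_le (fun E : Finset ℕ => decide (E ≠ ∅)) A
      norm_num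
      norm_num at this
      omega) x
  rw [normSum_filter, hAsum] at hGx
  refine ⟨G, hG, hG4, fun F hF a ha => ?_, hGx⟩
  obtain ⟨P, hP, haP⟩ := hGA F hF a ha
  obtain ⟨i, hi⟩ := hAmem P (List.mem_filter.1 hP).1
  exact ⟨i, P, hi, haP⟩

/-- Sums for a restriction `restr E x` are realized by pieces of `E`. -/
lemma exists_pieces_restr {c : ℕ} {E : Finset ℕ} {x : ℕ →₀ ℝ} {L : List (Finset ℕ)}
    (hL : Successive L) (hc : L.length ≤ c) :
    ∃ M, Successive M ∧ M.length ≤ c ∧ (∀ F ∈ M, F ⊆ E) ∧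
      normSum x M = normSum (restr E x) L := by
  refine ⟨L.map (· ∩ E), ?_, by simpa using hc, ?_, ?_⟩
  · refine List.pairwise_map.2 (hL.imp ?_)
    exact fun h a ha b hb => h a (Finset.mem_inter.1 ha).1 b (Finset.mem_inter.1 hb).1
  · intro F hF
    obtain ⟨P, -, rfl⟩ := List.mem_map.1 hF
    exact Finset.inter_subset_right
  · simp [normSum, restr_restr, Function.comp_def]

/-! ### The comparison -/

/-- The `k`-th iterate of the `q`-norm is at most twice the sum of the Tsirelson norms over at most `12`
successive pieces. -/
def PiecesBound (q : ℝ) (k : ℕ) : Prop :=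
  ∀ x, ∃ L, Successive L ∧ L.length ≤ 12 ∧ qAux q k x ≤ 2 * normSum x L

/-- For the distinguished set, which carries the weight `1/2 + q`, at most `4` pieces are needed. -/
def DistinguishedBound (q : ℝ) (k : ℕ) : Prop :=
  ∀ x, ∃ L, Successive L ∧ L.length ≤ 4 ∧ (1 / 2 + q) * qAux q k x ≤ 2 * normSum x L

lemma PiecesBound.restr {q : ℝ} {k : ℕ} (h : PiecesBound q k) (E : Finset ℕ) (x : ℕ →₀ ℝ) :
    ∃ L, Successive L ∧ L.length ≤ 12 ∧ (∀ F ∈ L, F ⊆ E) ∧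
      qAux q k (restr E x) ≤ 2 * normSum x L := by
  obtain ⟨L, hL, hc, hq⟩ := h (_root_.restr E x)
  obtain ⟨M, hM, hMc, hME, hMx⟩ := exists_pieces_restr (E := E) (x := x) hL hc
  exact ⟨M, hM, hMc, hME, by rwa [hMx]⟩

lemma DistinguishedBound.restr {q : ℝ} {k : ℕ} (h : DistinguishedBound q k) (E : Finset ℕ)
    (x : ℕ →₀ ℝ) :
    ∃ L, Successive L ∧ L.length ≤ 4 ∧ (∀ F ∈ L, F ⊆ E) ∧
      (1 / 2 + q) * qAux q k (restr E x) ≤ 2 * normSum x L := by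
  obtain ⟨L, hL, hc, hq⟩ := h (_root_.restr E x)
  obtain ⟨M, hM, hMc, hME, hMx⟩ := exists_pieces_restr (E := E) (x := x) hL hc
  exact ⟨M, hM, hMc, hME, by rwa [hMx]⟩

lemma supNorm_le_normSum (x : ℕ →₀ ℝ) : supNorm x ≤ normSum x [x.support] := by
  rw [normSum_cons, restr_support, normSum_nil, add_zero]
  exact supNorm_le_norm x

lemma successive_singleton (E : Finset ℕ) : Successive [E] := List.pairwise_singleton _ _

/-- In the expression for `qAux q (k + 1)`, multiplying by the weight `1/2 + q` of a distinguished set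
brings every weight down to at most `1/2`, as `(1/2 + q)² < 1/2`. -/
lemma weight_le {q : ℝ} (hq0 : 0 < q) (hq2 : (1 / 2 + q) ^ 2 < 1 / 2) {n : ℕ} (hn : 0 < n)
    (f : Fin n → ℝ) (hf : ∀ i, 0 ≤ f i) :
    (1 / 2 + q) * ((1 / 2) * (∑ i, f i) + q * ⨆ j, f j) ≤ (1 / 2) * ∑ i, f i := by
  have : Nonempty (Fin n) := ⟨⟨0, hn⟩⟩
  have h1 : ⨆ j, f j ≤ ∑ i, f i :=
    ciSup_le fun j => Finset.single_le_sum (fun i _ => hf i) (Finset.mem_univ j)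
  have h2 : 0 ≤ ∑ i, f i := Finset.sum_nonneg fun i _ => hf i
  have h3 : (1 / 2 + q) * q * ⨆ j, f j ≤ (1 / 2 + q) * q * ∑ i, f i :=
    mul_le_mul_of_nonneg_left h1 (by positivity)
  have h4 : (1 / 2 + q) ^ 2 * ∑ i, f i ≤ 1 / 2 * ∑ i, f i :=
    mul_le_mul_of_nonneg_right hq2.le h2
  linarith

lemma distinguishedBound_zero {q : ℝ} (hq1 : q < 1 / 2) :
    DistinguishedBound q 0 := by
  intro x
  refine ⟨[x.support], successive_singleton _, by simp, ?_⟩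
  have h := supNorm_le_normSum x
  have h0 := supNorm_nonneg x
  change (1 / 2 + q) * supNorm x ≤ _
  nlinarith

lemma distinguishedBound_succ {q : ℝ} (hq0 : 0 < q) (hq1 : q < 1 / 2)
    (hq2 : (1 / 2 + q) ^ 2 < 1 / 2) {k : ℕ} (ih : PiecesBound q k) :
    DistinguishedBound q (k + 1) := by
  intro x
  obtain ⟨L, hL, hc, hmax⟩ := exists_max_normSum 4 x
  refine ⟨L, hL, hc, ?_⟩
  have hθ : 0 < 1 / 2 + q := by linarith
  rw [mul_comm, ← le_div_iff₀ hθ, qAux_succ]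
  refine max_le ?_ (Real.sSup_le ?_ (div_nonneg (by linarith [normSum_nonneg x L]) hθ.le))
  · rw [le_div_iff₀ hθ]
    have h := (supNorm_le_normSum x).trans (hmax _ (successive_singleton _) (by simp))
    nlinarith [supNorm_nonneg x]
  · rintro _ ⟨n, E, hn, hE, rfl⟩
    rw [le_div_iff₀ hθ, mul_comm]
    refine (weight_le hq0 hq2 hn _ fun i => qAux_nonneg q k _).trans ?_
    choose P hP hPlen hPsub hPq using fun i => ih.restr (E i) x
    obtain ⟨G, hG, hG4, -, hGx⟩ := regroup_family hE P hP hPlen hPsub x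
    have h1 : ∑ i, qAux q k (restr (E i) x) ≤ ∑ i, 2 * normSum x (P i) :=
      Finset.sum_le_sum fun i _ => hPq i
    rw [← Finset.mul_sum] at h1
    have := hmax G hG hG4
    linarith

lemma piecesBound_zero (q : ℝ) : PiecesBound q 0 := by
  intro x
  refine ⟨[x.support], successive_singleton _, by simp, ?_⟩
  have h := supNorm_le_normSum x
  have h0 := supNorm_nonneg x
  change supNorm x ≤ _
  linarith

lemma piecesBound_succ {q : ℝ} {k : ℕ} (ih : PiecesBound q k) (ihd : DistinguishedBound q k) :
    PiecesBound q (k + 1) := by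
  intro x
  obtain ⟨L, hL, hc, hmax⟩ := exists_max_normSum 12 x
  refine ⟨L, hL, hc, ?_⟩
  rw [qAux_succ]
  refine max_le ?_ (Real.sSup_le ?_ (by linarith [normSum_nonneg x L]))
  · have h := (supNorm_le_normSum x).trans (hmax _ (successive_singleton _) (by simp))
    linarith [supNorm_nonneg x]
  rintro _ ⟨n, E, hn, hE, rfl⟩
  have : Nonempty (Fin n) := ⟨⟨0, hn⟩⟩
  obtain ⟨j, hj⟩ := exists_eq_ciSup_of_finite (f := fun j => qAux q k (restr (E j) x))
  rw [← hj]
  choose P hP hPlen hPsub hPq using fun i => ih.restr (E i) x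
  obtain ⟨M, hM, hM4, hMsub, hMq⟩ := ihd.restr (E j) x
  -- the pieces to the left and to the right of the distinguished set `E j`
  obtain ⟨A, hA, hA4, hAsub, hAx⟩ := regroup_family hE (fun i => if i < j then P i else [])
    (fun i => by split_ifs; exacts [hP i, List.Pairwise.nil])
    (fun i => by split_ifs; exacts [hPlen i, Nat.zero_le _])
    (fun i => by split_ifs; exacts [hPsub i, by simp]) x
  obtain ⟨B, hB, hB4, hBsub, hBx⟩ := regroup_family hE (fun i => if j < i then P i else [])
    (fun i => by split_ifs; exacts [hP i, List.Pairwise.nil])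
    (fun i => by split_ifs; exacts [hPlen i, Nat.zero_le _])
    (fun i => by split_ifs; exacts [hPsub i, by simp]) x
  have hAE : ∀ F ∈ A, ∀ a ∈ F, ∃ i, i < j ∧ a ∈ E i := by
    intro F hF a ha
    obtain ⟨i, Q, hQ, haQ⟩ := hAsub F hF a ha
    by_cases hij : i < j
    · rw [if_pos hij] at hQ
      exact ⟨i, hij, hPsub i Q hQ haQ⟩
    · simp [hij] at hQ
  have hBE : ∀ F ∈ B, ∀ a ∈ F, ∃ i, j < i ∧ a ∈ E i := by
    intro F hF a ha
    obtain ⟨i, Q, hQ, haQ⟩ := hBsub F hF a ha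
    by_cases hij : j < i
    · rw [if_pos hij] at hQ
      exact ⟨i, hij, hPsub i Q hQ haQ⟩
    · simp [hij] at hQ
  have hsucc : Successive (A ++ (M ++ B)) := by
    refine List.pairwise_append.2 ⟨hA, List.pairwise_append.2 ⟨hM, hB, ?_⟩, ?_⟩
    · intro F hF F' hF' a ha b hb
      obtain ⟨i, hi, hbi⟩ := hBE F' hF' b hb
      exact hE.1 j i hi a (hMsub F hF ha) b hbi
    · intro F hF F' hF' a ha b hb
      obtain ⟨i, hi, hai⟩ := hAE F hF a ha
      rcases List.mem_append.1 hF' with hF' | hF'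
      · exact hE.1 i j hi a hai b (hMsub F' hF' hb)
      · obtain ⟨i', hi', hbi⟩ := hBE F' hF' b hb
        exact hE.1 i i' (hi.trans hi') a hai b hbi
  have hle := hmax _ hsucc (by simp only [List.length_append]; omega)
  rw [normSum_append, normSum_append] at hle
  have hsum : ∑ i, qAux q k (restr (E i) x) ≤
      ∑ i, (2 * normSum x (if i < j then P i else []) +
        2 * normSum x (if j < i then P i else []) +
        if i = j then qAux q k (restr (E j) x) else 0) := by
    refine Finset.sum_le_sum fun i _ => ?_
    have := hPq i
    rcases lt_trichotomy i j with h | h | h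
    · simpa [h, h.ne, h.not_gt, normSum_nil] using this
    · simp [h, normSum_nil]
    · simpa [h, h.ne', h.not_gt, normSum_nil] using this
  rw [Finset.sum_add_distrib, Finset.sum_add_distrib, ← Finset.mul_sum, ← Finset.mul_sum,
    Finset.sum_ite_eq' Finset.univ j, if_pos (Finset.mem_univ j)] at hsum
  linarith

lemma piecesBound {q : ℝ} (hq0 : 0 < q) (hq1 : q < 1 / 2) (hq2 : (1 / 2 + q) ^ 2 < 1 / 2)
    (k : ℕ) : PiecesBound q k ∧ DistinguishedBound q k := by
  induction k with
  | zero => exact ⟨piecesBound_zero q, distinguishedBound_zero hq1⟩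
  | succ k ih =>
    exact ⟨piecesBound_succ ih.1 ih.2, distinguishedBound_succ hq0 hq1 hq2 ih.1⟩

/-- For `0 < q < 1/2` with `(1/2 + q)² < 1/2`, the norm `‖·‖_q` is equivalent to the
Tsirelson norm on the finitely supported sequences:  `‖x‖_T ≤ ‖x‖_q` and
`‖x‖_q ≤ C ‖x‖_T` for some constant `C ≥ 1`. -/
theorem stmt13 (q : ℝ) (hq0 : 0 < q) (hq1 : q < 1 / 2)
    (hq2 : (1 / 2 + q) ^ 2 < 1 / 2) :
    (∀ x : ℕ →₀ ℝ, tsirelsonNorm x ≤ qNorm q x) ∧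
    ∃ C : ℝ, 1 ≤ C ∧ ∀ x : ℕ →₀ ℝ, qNorm q x ≤ C * tsirelsonNorm x := by
  refine ⟨fun x => ?_, 24, by norm_num, fun x => ?_⟩
  · exact ciSup_mono ⟨ellOne x, by rintro _ ⟨k, rfl⟩; exact qAux_le_ellOne hq0 hq1 k x⟩
      fun k => tsAux_le_qAux hq0 hq1 k x
  · refine ciSup_le fun k => ?_
    obtain ⟨L, -, hL, hq⟩ := (piecesBound hq0 hq1 hq2 k).1 x
    have h1 := normSum_le x L
    have h2 : (L.length : ℝ) * tsirelsonNorm x ≤ 12 * tsirelsonNorm x :=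
      mul_le_mul_of_nonneg_right (by exact_mod_cast hL) (tsirelsonNorm_nonneg x)
    linarith
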